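/- Assume αχ(M) ≤ 0 and that there exists a constant α-curvature metric r* ∈ Ω (K_i(r*) = s_α(r*)·(r*_i)^α for all i). Then every C¹ solution u : [0,∞) → ℝ^N of the extended α-flow with r(0) = (e^{u_1(0)},…,e^{u_N(0)}) ∈ Ω and Π_{i=1}^N r_i(0) = Π_{i=1}^N r*_i converges exponentially fast to u* = (ln r*_1,…,ln r*_N), i.e. there exist C, β > 0 with ‖u(t) − u*‖ ≤ C e^{−βt} for all t ≥ 0; in particular the flow deforms any such initial metric to the metric of constant α-curvature. -/

import Mathlib

/-!
The right-hand side of the extended flow is minus a monotone operator in the coordinates `u = ln r`,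
so the squared Euclidean distance to `u* = ln r*` is a Lyapunov function; no energy functional is
needed.

* For one triangle, the map from logarithmic radii to generalized angles is a monotone (decreasing)
  operator on all of `ℝ³` (`triPair_antitone`). Where the triangle is nondegenerate its Jacobian is
  negative semidefinite with kernel the constants (`tri_deriv_sign`, resting on
  `weights_identity` and on `I ≥ 0`). Where it is degenerate the angles take only the values `0` and
  `π`, and a continuous function that decreases locally away from finitely many values is
  decreasing (`antitone_of_locally`). Summing over faces, the extended curvature is monotone
  (`Kt_line_monotone`).
* At a nondegenerate metric the derivative of the curvature is positive definite on the hyperplane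
  `∑ d i = 0`, which gives a local estimate `⟨d, K̃(u* + d) - K̃(u*)⟩ ≥ c ‖d‖²`. Monotonicity along
  rays extends it to any ball (`Kt_strong`).
* The term `s_α r_i ^ α` is `2πχ` times a softmax of `α u`. As softmax is monotone and `αχ ≤ 0`, this
  term contributes with the favourable sign (`sA_antitone`).
* Generalized angles of a triangle add up to `π`, so the total curvature does not depend on the
  metric (`sum_Kt_const`); since `r*` has constant `α`-curvature, it equals `2πχ`. Hence `∑ u_i` is
  conserved and `u - u*` stays in the hyperplane.

Together these give `f' ≤ -γ f` for `f = ∑ (u_i - u*_i)²`, first with `f` bounded by `f 0` to fix the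
ball in which the strong estimate is used, and then exponential decay of `f`.
-/

open Real Filter Topology

namespace IDCP

variable {N : ℕ}

/-- The set of edges: 2-element subsets of vertices contained in some face. -/
def edges (Fc : Finset (Finset (Fin N))) : Finset (Finset (Fin N)) :=
  Fc.biUnion fun f => f.powersetCard 2

/-- `Fc` is the face set of a triangulation of a closed connected surface:
every face has 3 vertices, every edge lies in exactly two faces, and the
1-skeleton is connected. -/
structure IsTriangulation (Fc : Finset (Finset (Fin N))) : Prop where
  card3 : ∀ f ∈ Fc, f.card = 3
  edge2 : ∀ e ∈ edges Fc, (Fc.filter fun f => e ⊆ f).card = 2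
  conn : (SimpleGraph.fromRel fun i j => ({i, j} : Finset (Fin N)) ∈ edges Fc).Connected

/-- Euler characteristic χ(M) = N − |E| + |F|. -/
def chi (Fc : Finset (Finset (Fin N))) : ℤ :=
  (N : ℤ) - ((edges Fc).card : ℤ) + (Fc.card : ℤ)

/-- Edge length l_ij = √(r_i² + r_j² + 2 r_i r_j I_{ij}). -/
noncomputable def len (I : Finset (Fin N) → ℝ) (r : Fin N → ℝ) (i j : Fin N) : ℝ :=
  Real.sqrt (r i ^ 2 + r j ^ 2 + 2 * r i * r j * I {i, j})

/-- The cosine of the inner angle at `i` in triangle `{i,j,k}`. -/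
noncomputable def cosAng (I : Finset (Fin N) → ℝ) (r : Fin N → ℝ) (i j k : Fin N) : ℝ :=
  (len I r i j ^ 2 + len I r i k ^ 2 - len I r j k ^ 2) / (2 * len I r i j * len I r i k)

/-- The auxiliary function Λ. -/
noncomputable def Lam (x : ℝ) : ℝ :=
  if x ≤ -1 then π else if x ≤ 1 then Real.arccos x else 0

/-- Discrete Gaussian curvature K_i = 2π − Σ_{{i,j,k}∈F} θ_i^{jk}.  Every face
containing `i` appears exactly twice (once for each ordering of `j,k`), whence
the factor 1/2. -/
noncomputable def K (Fc : Finset (Finset (Fin N))) (I : Finset (Fin N) → ℝ)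
    (r : Fin N → ℝ) (i : Fin N) : ℝ :=
  2 * π - (1 / 2) * ∑ j, ∑ k,
    (if ({i, j, k} : Finset (Fin N)) ∈ Fc then Real.arccos (cosAng I r i j k) else 0)

/-- Extended curvature K̃_i = 2π − Σ θ̃_i^{jk}, using the generalized angles Λ. -/
noncomputable def Kt (Fc : Finset (Finset (Fin N))) (I : Finset (Fin N) → ℝ)
    (r : Fin N → ℝ) (i : Fin N) : ℝ :=
  2 * π - (1 / 2) * ∑ j, ∑ k,
    (if ({i, j, k} : Finset (Fin N)) ∈ Fc then Lam (cosAng I r i j k) else 0)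

/-- The set Ω of inversive distance circle packing metrics. -/
def Omega (Fc : Finset (Finset (Fin N))) (I : Finset (Fin N) → ℝ) : Set (Fin N → ℝ) :=
  {r | (∀ i, 0 < r i) ∧ ∀ i j k : Fin N, ({i, j, k} : Finset (Fin N)) ∈ Fc →
    len I r j k < len I r i j + len I r i k}

/-- s_α = 2πχ(M)/‖r‖_α^α. -/
noncomputable def sA (Fc : Finset (Finset (Fin N))) (α : ℝ) (r : Fin N → ℝ) : ℝ :=
  2 * π * (chi Fc : ℝ) / ∑ j, r j ^ α

/-- Back from u-coordinates: r_i = e^{u_i}. -/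
noncomputable def rOf (u : Fin N → ℝ) : Fin N → ℝ := fun i => Real.exp (u i)

/-- ln Ω, the image of Ω under the coordinate change r ↦ u, u_i = ln r_i. -/
def lnOmega (Fc : Finset (Finset (Fin N))) (I : Finset (Fin N) → ℝ) : Set (Fin N → ℝ) :=
  {u | rOf u ∈ Omega Fc I}

/-- `u` solves the α-flow du_i/dt = s_α r_i^α − K_i on the time set `D`,
staying in ln Ω. -/
def IsFlowSol (Fc : Finset (Finset (Fin N))) (I : Finset (Fin N) → ℝ) (α : ℝ)
    (D : Set ℝ) (u : ℝ → Fin N → ℝ) : Prop :=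
  ∀ t ∈ D, rOf (u t) ∈ Omega Fc I ∧
    ∀ i, HasDerivWithinAt (fun s => u s i)
      (sA Fc α (rOf (u t)) * rOf (u t) i ^ α - K Fc I (rOf (u t)) i) D t

/-- `u` solves the extended α-flow du_i/dt = s_α r_i^α − K̃_i on the time set `D`. -/
def IsExtFlowSol (Fc : Finset (Finset (Fin N))) (I : Finset (Fin N) → ℝ) (α : ℝ)
    (D : Set ℝ) (u : ℝ → Fin N → ℝ) : Prop :=
  ∀ t ∈ D, ∀ i, HasDerivWithinAt (fun s => u s i)
      (sA Fc α (rOf (u t)) * rOf (u t) i ^ α - Kt Fc I (rOf (u t)) i) D t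

/-- Lk(A): pairs (e,v) with both endpoints of e outside A, v ∈ A, and e,v spanning a face. -/
def Lk (Fc : Finset (Finset (Fin N))) (A : Finset (Fin N)) :
    Finset (Finset (Fin N) × Fin N) :=
  ((edges Fc) ×ˢ (Finset.univ : Finset (Fin N))).filter fun p =>
    (∀ x ∈ p.1, x ∉ A) ∧ p.2 ∈ A ∧ insert p.2 p.1 ∈ Fc

/-- Euler characteristic χ(F_A) of the subcomplex spanned by A. -/
def chiSub (Fc : Finset (Finset (Fin N))) (A : Finset (Fin N)) : ℤ :=
  (A.card : ℤ) - (((edges Fc).filter (fun e => e ⊆ A)).card : ℤ)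
    + ((Fc.filter (fun f => f ⊆ A)).card : ℤ)

/-- The lower bound −Σ_{(e,v)∈Lk(A)}(π − Λ(I_e)) + 2πχ(F_A) defining Y_A. -/
noncomputable def Ybound (Fc : Finset (Finset (Fin N))) (I : Finset (Fin N) → ℝ)
    (A : Finset (Fin N)) : ℝ :=
  -(∑ p ∈ Lk Fc A, (π - Lam (I p.1))) + 2 * π * (chiSub Fc A : ℝ)

/-- x ∈ Y. -/
noncomputable def memY (Fc : Finset (Finset (Fin N))) (I : Finset (Fin N) → ℝ)
    (x : Fin N → ℝ) : Prop :=
  (∑ i, x i) = 2 * π * (chi Fc : ℝ) ∧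
    ∀ A : Finset (Fin N), A.Nonempty → A ≠ Finset.univ → Ybound Fc I A < ∑ i ∈ A, x i

/-- x ∈ Ȳ. -/
noncomputable def memYbar (Fc : Finset (Finset (Fin N))) (I : Finset (Fin N) → ℝ)
    (x : Fin N → ℝ) : Prop :=
  (∑ i, x i) = 2 * π * (chi Fc : ℝ) ∧
    ∀ A : Finset (Fin N), A.Nonempty → A ≠ Finset.univ → Ybound Fc I A ≤ ∑ i ∈ A, x i

/-! ### Plane geometry of a generalized triangle -/

/-- With `p, q, r` the squared radii and `x, y, z` the products `r_j r_k I_{jk}`, the three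
quadratic factors are, up to positive multiples, the off-diagonal entries of the Jacobian of the
angles. The identity makes the second elementary symmetric function of these entries manifestly
positive as soon as the triangle is nondegenerate and the inversive distances are nonnegative. -/
theorem weights_identity (p q r x y z : ℝ) :
    (p + q + 2 * z) * ((q * r - x ^ 2 + q * y + r * z + x * (y + z)) *
        (p * r - y ^ 2 + p * x + r * z + y * (x + z)))
      + (q + r + 2 * x) * ((p * r - y ^ 2 + p * x + r * z + y * (x + z)) *
        (p * q - z ^ 2 + p * x + q * y + z * (x + y)))
      + (p + r + 2 * y) * ((q * r - x ^ 2 + q * y + r * z + x * (y + z)) *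
        (p * q - z ^ 2 + p * x + q * y + z * (x + y)))
    = ((q * r - x ^ 2 + q * y + r * z + x * (y + z)) +
        (p * r - y ^ 2 + p * x + r * z + y * (x + z)) +
        (p * q - z ^ 2 + p * x + q * y + z * (x + y))) *
      ((q + x) * (r + y) * (p + z) + (r + x) * (p + y) * (q + z)) := by
  ring

/-- The cosine of the angle opposite to the side of squared length `a` in a triangle with squared
side lengths `a, b, c`; a formal expression when no such triangle exists. -/
noncomputable def cosOf (a b c : ℝ) : ℝ := (c + b - a) / (2 * √c * √b)

/-- Sixteen times the squared area of the triangle with squared side lengths `a, b, c`. For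
positive arguments it is positive exactly when the strict triangle inequalities hold. -/
def heron (a b c : ℝ) : ℝ := 4 * b * c - (b + c - a) ^ 2

theorem heron_rot (a b c : ℝ) : heron b c a = heron a b c := by unfold heron; ring

/-- Positivity of the quadratic form `w₃ (d₁-d₂)² + w₁ (d₂-d₃)² + w₂ (d₁-d₃)²` away from constants.
The determinant condition `hquad` only gives definiteness; `hlin` says that the form is positive
when summed over the two coordinates of the vertices of a triangle with squared sides `a, b, c`,
which fixes the sign. -/
theorem form_pos {a b c w₁ w₂ w₃ : ℝ} (ha : 0 < a) (hD : 0 < heron a b c)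
    (hlin : 0 < a * w₁ + b * w₂ + c * w₃) (hc : 0 < c)
    (hquad : 0 < w₁ * w₂ + w₂ * w₃ + w₁ * w₃) (X Y : ℝ) (hXY : ¬ (X = 0 ∧ Y = 0)) :
    0 < w₃ * X ^ 2 + w₁ * Y ^ 2 + w₂ * (X + Y) ^ 2 := by
  have h1 : 0 ≤ a * (a * w₁ ^ 2 + (a + b - c) * (w₁ * w₂) + b * w₂ ^ 2) := by
    unfold heron at hD
    nlinarith [sq_nonneg (2 * a * w₁ + (a + b - c) * w₂), mul_nonneg hD.le (sq_nonneg w₂)]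
  have h1' := nonneg_of_mul_nonneg_right h1 ha
  have h2 : 0 < (w₁ + w₂) * (a * w₁ + b * w₂ + c * w₃) := by
    nlinarith [mul_pos hc hquad]
  have h3 : 0 < w₁ + w₂ := pos_of_mul_pos_left h2 hlin.le
  have h4 : 0 < (w₁ + w₂) * (w₃ * X ^ 2 + w₁ * Y ^ 2 + w₂ * (X + Y) ^ 2) := by
    have e : (w₁ + w₂) * (w₃ * X ^ 2 + w₁ * Y ^ 2 + w₂ * (X + Y) ^ 2)
      = ((w₁ + w₂) * Y + w₂ * X) ^ 2 + (w₁ * w₂ + w₂ * w₃ + w₁ * w₃) * X ^ 2 := by ring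
    rw [e]
    by_cases hX : X = 0
    · have hY : Y ≠ 0 := fun h => hXY ⟨hX, h⟩
      subst hX
      have := pow_pos (abs_pos.2 (mul_ne_zero h3.ne' hY)) 2
      rw [sq_abs] at this
      simpa using this
    · positivity
  exact pos_of_mul_pos_right h4 h3.le

theorem cosOf_sq {a b c : ℝ} (hb : 0 < b) (hc : 0 < c) :
    1 - cosOf a b c ^ 2 = heron a b c / (4 * b * c) := by
  unfold cosOf heron
  rw [div_pow, mul_pow, mul_pow, sq_sqrt hb.le, sq_sqrt hc.le]
  field_simp
  ring

theorem abs_cosOf_lt {a b c : ℝ} (hb : 0 < b) (hc : 0 < c) (hD : 0 < heron a b c) :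
    -1 < cosOf a b c ∧ cosOf a b c < 1 := by
  have h : 0 < 1 - cosOf a b c ^ 2 := by rw [cosOf_sq hb hc]; positivity
  constructor <;> nlinarith

theorem sqrt_one_sub_cosOf_sq {a b c : ℝ} (hb : 0 < b) (hc : 0 < c) :
    √(1 - cosOf a b c ^ 2) = √(heron a b c) / (2 * √c * √b) := by
  rw [cosOf_sq hb hc, sqrt_div' _ (by positivity)]
  congr 1
  rw [show 4 * b * c = 2 ^ 2 * c * b by ring, sqrt_mul (by positivity), sqrt_mul (by positivity),
    sqrt_sq (by norm_num)]

/-- The generalized angle opposite to the side of squared length `a`. As `Real.arccos` is constant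
on `(-∞, -1]` and on `[1, ∞)`, it is already the extension by `π` and `0`. -/
noncomputable def ang (a b c : ℝ) : ℝ := arccos (cosOf a b c)

theorem hasDerivAt_ang {a b c : ℝ → ℝ} {a' b' c' s : ℝ} (ha : HasDerivAt a a' s)
    (hb : HasDerivAt b b' s) (hc : HasDerivAt c c' s) (hb0 : 0 < b s) (hc0 : 0 < c s)
    (hD : 0 < heron (a s) (b s) (c s)) :
    HasDerivAt (fun t => ang (a t) (b t) (c t))
      ((a' - (a s + b s - c s) / (2 * b s) * b' - (a s + c s - b s) / (2 * c s) * c') /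
        √(heron (a s) (b s) (c s))) s := by
  have hlt := abs_cosOf_lt hb0 hc0 hD
  have hsb : 0 < √(b s) := sqrt_pos.2 hb0
  have hsc : 0 < √(c s) := sqrt_pos.2 hc0
  have h1 : HasDerivAt (fun t => cosOf (a t) (b t) (c t)) _ s :=
    ((hc.add hb).sub ha).div (((hc.sqrt hc0.ne').const_mul 2).mul (hb.sqrt hb0.ne'))
      (by positivity)
  have h2 := (hasDerivAt_arccos hlt.1.ne' hlt.2.ne).comp s h1
  refine h2.congr_deriv ?_
  rw [sqrt_one_sub_cosOf_sq hb0 hc0]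
  have hsD : 0 < √(heron (a s) (b s) (c s)) := sqrt_pos.2 hD
  generalize √(heron (a s) (b s) (c s)) = R at *
  simp only [Pi.add_apply, Pi.sub_apply]
  have eb : b s = √(b s) ^ 2 := (sq_sqrt hb0.le).symm
  have ec : c s = √(c s) ^ 2 := (sq_sqrt hc0.le).symm
  generalize √(b s) = B at *
  generalize √(c s) = C at *
  rw [eb, ec]
  field_simp
  ring

theorem ang_eq_zero {a b c : ℝ} (hb : 0 < b) (hc : 0 < c) (hD : heron a b c ≤ 0)
    (h : 0 ≤ b + c - a) : ang a b c = 0 := by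
  have hs : 0 ≤ cosOf a b c := div_nonneg (by linarith) (by positivity)
  have h2 : 1 - cosOf a b c ^ 2 ≤ 0 := by
    rw [cosOf_sq hb hc]; exact div_nonpos_of_nonpos_of_nonneg hD (by positivity)
  exact arccos_of_one_le (by nlinarith)

theorem ang_eq_pi {a b c : ℝ} (hb : 0 < b) (hc : 0 < c) (hD : heron a b c ≤ 0)
    (h : b + c - a ≤ 0) : ang a b c = π := by
  have hs : cosOf a b c ≤ 0 := div_nonpos_of_nonpos_of_nonneg (by linarith) (by positivity)
  have h2 : 1 - cosOf a b c ^ 2 ≤ 0 := by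
    rw [cosOf_sq hb hc]; exact div_nonpos_of_nonpos_of_nonneg hD (by positivity)
  exact arccos_of_le_neg_one (by nlinarith)

theorem ang_mem {a b c : ℝ} (hb : 0 < b) (hc : 0 < c) (hD : heron a b c ≤ 0) :
    ang a b c = 0 ∨ ang a b c = π := by
  rcases le_total 0 (b + c - a) with h | h
  · exact Or.inl (ang_eq_zero hb hc hD h)
  · exact Or.inr (ang_eq_pi hb hc hD h)

/-! ### The angle sum -/

theorem ang_sum_degenerate {a b c : ℝ} (ha : 0 < a) (hb : 0 < b) (hc : 0 < c)
    (hD : heron a b c ≤ 0) (h : b + c - a ≤ 0) : ang a b c + ang b c a + ang c a b = π := by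
  have h2 : heron b c a ≤ 0 := by rwa [heron_rot]
  have h3 : heron c a b ≤ 0 := by rwa [heron_rot]
  rw [ang_eq_pi hb hc hD h, ang_eq_zero hc ha h2 (by linarith),
    ang_eq_zero ha hb h3 (by linarith)]
  ring

theorem ang_sum_nondegenerate {a b c : ℝ} (ha : 0 < a) (hb : 0 < b) (hc : 0 < c)
    (hD : 0 < heron a b c) : ang a b c + ang b c a + ang c a b = π := by
  have h2 : 0 < heron b c a := by rwa [heron_rot]
  have h3 : 0 < heron c a b := by rwa [heron_rot]
  have hA := abs_cosOf_lt hb hc hD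
  have hB := abs_cosOf_lt hc ha h2
  have hC := abs_cosOf_lt ha hb h3
  have cA : cos (ang a b c) = cosOf a b c := cos_arccos hA.1.le hA.2.le
  have cB : cos (ang b c a) = cosOf b c a := cos_arccos hB.1.le hB.2.le
  have cC : cos (ang c a b) = cosOf c a b := cos_arccos hC.1.le hC.2.le
  have sA : sin (ang a b c) = √(heron a b c) / (2 * √c * √b) := by
    rw [ang, sin_arccos, sqrt_one_sub_cosOf_sq hb hc]
  have sB : sin (ang b c a) = √(heron a b c) / (2 * √a * √c) := by
    rw [ang, sin_arccos, sqrt_one_sub_cosOf_sq hc ha, heron_rot]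
  have hsa : 0 < √a := sqrt_pos.2 ha
  have hsb : 0 < √b := sqrt_pos.2 hb
  have hsc : 0 < √c := sqrt_pos.2 hc
  have hR : 0 < √(heron a b c) := sqrt_pos.2 hD
  have ea : √a ^ 2 = a := sq_sqrt ha.le
  have eb : √b ^ 2 = b := sq_sqrt hb.le
  have ec : √c ^ 2 = c := sq_sqrt hc.le
  have eR : √(heron a b c) ^ 2 = heron a b c := sq_sqrt hD.le
  have hsin : 0 < sin (ang a b c + ang b c a) := by
    rw [sin_add, sA, sB, cA, cB]
    have : √(heron a b c) / (2 * √c * √b) * cosOf b c a +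
        cosOf a b c * (√(heron a b c) / (2 * √a * √c)) = √(heron a b c) / (2 * √a * √b) := by
      unfold cosOf
      field_simp
      rw [ec]; ring
    rw [this]; positivity
  have hcos : cos (ang a b c + ang b c a) = cos (π - ang c a b) := by
    rw [cos_add, cos_pi_sub, sA, sB, cA, cB, cC]
    have e : √(heron a b c) / (2 * √c * √b) * (√(heron a b c) / (2 * √a * √c)) =
        heron a b c / (4 * c * √a * √b) := by
      rw [div_mul_div_comm, mul_self_sqrt hD.le]
      field_simp
      rw [ec]; ring
    rw [e]
    unfold cosOf
    field_simp
    rw [ec, heron]; ring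
  have hA0 := arccos_nonneg (cosOf a b c)
  have hB0 := arccos_nonneg (cosOf b c a)
  have hAp := arccos_le_pi (cosOf a b c)
  have hBp := arccos_le_pi (cosOf b c a)
  have hle : ang a b c + ang b c a ≤ π := by
    by_contra hcon
    push Not at hcon
    have : 0 ≤ sin (2 * π - (ang a b c + ang b c a)) :=
      sin_nonneg_of_nonneg_of_le_pi (by unfold ang at *; linarith) (by linarith)
    rw [sin_two_pi_sub] at this
    linarith
  have := injOn_cos ⟨add_nonneg hA0 hB0, hle⟩
    ⟨by have := arccos_le_pi (cosOf c a b); unfold ang; linarith,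
     by have := arccos_nonneg (cosOf c a b); unfold ang; linarith⟩ hcos
  unfold ang at *
  linarith

/-- Generalized angles add up to `π`, for degenerate side lengths too. -/
theorem ang_sum {a b c : ℝ} (ha : 0 < a) (hb : 0 < b) (hc : 0 < c) :
    ang a b c + ang b c a + ang c a b = π := by
  rcases lt_or_ge 0 (heron a b c) with hD | hD
  · exact ang_sum_nondegenerate ha hb hc hD
  have h2 : heron b c a ≤ 0 := by rwa [heron_rot]
  have h3 : heron c a b ≤ 0 := by rwa [heron_rot]
  rcases le_total (b + c - a) 0 with h | h
  · exact ang_sum_degenerate ha hb hc hD h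
  rcases le_total (c + a - b) 0 with h' | h'
  · linarith [ang_sum_degenerate hb hc ha h2 h']
  rcases le_total (a + b - c) 0 with h'' | h''
  · linarith [ang_sum_degenerate hc ha hb h3 h'']
  exfalso
  -- with all three differences nonnegative, `heron` could not be nonpositive
  have e : 8 * (a * b * c) + (b + c - a) * (c + a - b) * (a + b - c) =
      (a + b + c) * heron a b c := by unfold heron; ring
  have e1 : 0 < a * b * c := by positivity
  have e2 := mul_nonneg (mul_nonneg h h') h''
  have e3 : (a + b + c) * heron a b c ≤ 0 :=
    mul_nonpos_of_nonneg_of_nonpos (by positivity) hD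
  linarith

/-! ### Monotonicity of the generalized angles -/

/-- A continuous function is antitone if, at each point where its value is not one of finitely many
exceptional values, it is antitone on a short interval to the right. This passes over the times at
which a triangle is degenerate, about whose distribution nothing needs to be known: the angles are
then `0` or `π`, so only finitely many values occur. -/
theorem antitone_of_locally {f : ℝ → ℝ} (hf : Continuous f) {S : Set ℝ} (hS : S.Finite)
    (h : ∀ t, f t ∈ S ∨ ∃ ε > 0, AntitoneOn f (Set.Icc t (t + ε))) : Antitone f := by
  intro a b hab
  by_contra! hlt
  -- an intermediate level that is not exceptional
  obtain ⟨y, ⟨hy1, hy2⟩, hyS⟩ : ∃ y ∈ Set.Ioo (f a) (f b), y ∉ S :=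
    (Set.Ioo_infinite hlt).exists_notMem_finite hS
  have hcpt : IsCompact (Set.Icc a b ∩ f ⁻¹' {y}) :=
    isCompact_Icc.inter_right (isClosed_singleton.preimage hf)
  have hne : (Set.Icc a b ∩ f ⁻¹' {y}).Nonempty := by
    obtain ⟨t, ht, hty⟩ := intermediate_value_Icc hab hf.continuousOn ⟨hy1.le, hy2.le⟩
    exact ⟨t, ht, hty⟩
  -- the last time at which the level `y` is attained
  obtain ⟨s, ⟨⟨has, hsb⟩, hsy⟩, hmax⟩ := hcpt.exists_isGreatest hne
  simp only [Set.mem_preimage, Set.mem_singleton_iff] at hsy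
  rcases h s with hs | ⟨ε, hε, hanti⟩
  · exact hyS (hsy ▸ hs)
  have hsb' : s < b := lt_of_le_of_ne hsb (by rintro rfl; linarith)
  set t := min b (s + ε) with ht
  have hst : s < t := lt_min hsb' (by linarith)
  have h1 : f t ≤ y := by
    rw [← hsy]
    exact hanti ⟨le_rfl, by linarith⟩ ⟨hst.le, min_le_right _ _⟩ hst.le
  obtain ⟨t', ⟨ht1, ht2⟩, ht'⟩ := intermediate_value_Icc (min_le_left b (s + ε)) hf.continuousOn
    ⟨h1, hy2.le⟩
  have := hmax ⟨⟨by linarith, ht2⟩, ht'⟩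
  linarith

/-- The squared length of an edge of inversive distance `I` between vertices with logarithmic radii
`x` and `y`. -/
noncomputable def lsq (I x y : ℝ) : ℝ := exp x ^ 2 + exp y ^ 2 + 2 * exp x * exp y * I

theorem lsq_pos {I : ℝ} (hI : 0 ≤ I) (x y : ℝ) : 0 < lsq I x y := by
  unfold lsq; positivity

theorem lsq_comm (I x y : ℝ) : lsq I x y = lsq I y x := by unfold lsq; ring

theorem hasDerivAt_lsq (I x y k m s : ℝ) :
    HasDerivAt (fun t => lsq I (x + t * k) (y + t * m))
      (2 * (exp (x + s * k) ^ 2 + exp (x + s * k) * exp (y + s * m) * I) * k +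
        2 * (exp (y + s * m) ^ 2 + exp (x + s * k) * exp (y + s * m) * I) * m) s := by
  have hx : HasDerivAt (fun t => exp (x + t * k)) (exp (x + s * k) * k) s := by
    simpa using (((hasDerivAt_id s).mul_const k).const_add x).exp
  have hy : HasDerivAt (fun t => exp (y + t * m)) (exp (y + s * m) * m) s := by
    simpa using (((hasDerivAt_id s).mul_const m).const_add y).exp
  have := ((hx.pow 2).add (hy.pow 2)).add (((hx.const_mul 2).mul hy).mul_const I)
  refine this.congr_deriv ?_
  simp only [Nat.add_one_sub_one, pow_one, Nat.cast_ofNat]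
  ring

/-- The pairing of a direction `d` with the vector of generalized angles of the triangle with
logarithmic radii `u`; `Iₘ` belongs to the edge opposite to vertex `m`. -/
noncomputable def triPair (I₁ I₂ I₃ u₁ u₂ u₃ d₁ d₂ d₃ : ℝ) : ℝ :=
  d₁ * ang (lsq I₁ u₂ u₃) (lsq I₂ u₃ u₁) (lsq I₃ u₁ u₂) +
  d₂ * ang (lsq I₂ u₃ u₁) (lsq I₃ u₁ u₂) (lsq I₁ u₂ u₃) +
  d₃ * ang (lsq I₃ u₁ u₂) (lsq I₁ u₂ u₃) (lsq I₂ u₃ u₁)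

/-- The Jacobian of the angles of a nondegenerate triangle with respect to the logarithmic radii is
negative semidefinite with kernel the constant vectors. The common positive factor of the angle
derivatives is omitted; primes are derivatives of the squared side lengths in the direction `d`. -/
theorem tri_deriv_sign {p q r x y z a b c d₁ d₂ d₃ a' b' c' : ℝ} (hp : 0 < p) (hq : 0 < q)
    (hr : 0 < r) (hx : 0 ≤ x) (hy : 0 ≤ y) (hz : 0 ≤ z)
    (ha : a = q + r + 2 * x) (hb : b = r + p + 2 * y) (hc : c = p + q + 2 * z)
    (hD : 0 < heron a b c)
    (ha' : a' = 2 * (q + x) * d₂ + 2 * (r + x) * d₃)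
    (hb' : b' = 2 * (r + y) * d₃ + 2 * (p + y) * d₁)
    (hc' : c' = 2 * (p + z) * d₁ + 2 * (q + z) * d₂) :
    d₁ * (a' - (a + b - c) / (2 * b) * b' - (a + c - b) / (2 * c) * c') +
    d₂ * (b' - (b + c - a) / (2 * c) * c' - (b + a - c) / (2 * a) * a') +
    d₃ * (c' - (c + a - b) / (2 * a) * a' - (c + b - a) / (2 * b) * b') ≤ 0 ∧
    (¬ (d₁ = d₂ ∧ d₂ = d₃) →
    d₁ * (a' - (a + b - c) / (2 * b) * b' - (a + c - b) / (2 * c) * c') +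
    d₂ * (b' - (b + c - a) / (2 * c) * c' - (b + a - c) / (2 * a) * a') +
    d₃ * (c' - (c + a - b) / (2 * a) * a' - (c + b - a) / (2 * b) * b') < 0) := by
  set n₁ := q * r - x ^ 2 + q * y + r * z + x * (y + z) with hn₁
  set n₂ := p * r - y ^ 2 + p * x + r * z + y * (x + z) with hn₂
  set n₃ := p * q - z ^ 2 + p * x + q * y + z * (x + y) with hn₃
  have ha0 : 0 < a := by rw [ha]; positivity
  have hb0 : 0 < b := by rw [hb]; positivity
  have hc0 : 0 < c := by rw [hc]; positivity
  have hDn : heron a b c = 4 * (n₁ + n₂ + n₃) := by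
    rw [heron, ha, hb, hc]; ring
  have key : d₁ * (a' - (a + b - c) / (2 * b) * b' - (a + c - b) / (2 * c) * c') +
    d₂ * (b' - (b + c - a) / (2 * c) * c' - (b + a - c) / (2 * a) * a') +
    d₃ * (c' - (c + a - b) / (2 * a) * a' - (c + b - a) / (2 * b) * b') =
    -2 * (n₃ / c * (d₁ - d₂) ^ 2 + n₁ / a * (d₂ - d₃) ^ 2 +
      n₂ / b * ((d₁ - d₂) + (d₂ - d₃)) ^ 2) := by
    field_simp
    rw [ha', hb', hc', ha, hb, hc]
    ring
  have hpos : ∀ X Y : ℝ, ¬ (X = 0 ∧ Y = 0) →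
      0 < n₃ / c * X ^ 2 + n₁ / a * Y ^ 2 + n₂ / b * (X + Y) ^ 2 := by
    refine form_pos ha0 hD ?_ hc0 ?_
    · rw [mul_div_cancel₀ _ ha0.ne', mul_div_cancel₀ _ hb0.ne', mul_div_cancel₀ _ hc0.ne']
      linarith
    · have e : n₁ / a * (n₂ / b) + n₂ / b * (n₃ / c) + n₁ / a * (n₃ / c) =
        (n₁ + n₂ + n₃) * ((q + x) * (r + y) * (p + z) + (r + x) * (p + y) * (q + z)) /
          (a * b * c) := by
        rw [hn₁, hn₂, hn₃, ← weights_identity, ← hn₁, ← hn₂, ← hn₃, ← ha, ← hc,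
          show p + r + 2 * y = b by rw [hb]; ring]
        field_simp
      rw [e]
      have : 0 < n₁ + n₂ + n₃ := by linarith
      positivity
  rw [key]
  constructor
  · by_cases h : d₁ - d₂ = 0 ∧ d₂ - d₃ = 0
    · simp [h.1, h.2]
    · linarith [hpos _ _ h]
  · intro h
    have := hpos (d₁ - d₂) (d₂ - d₃) (fun h' => h ⟨by linarith [h'.1], by linarith [h'.2]⟩)
    linarith

theorem hasDerivAt_triPair {I₁ I₂ I₃ : ℝ} (h₁ : 0 ≤ I₁) (h₂ : 0 ≤ I₂) (h₃ : 0 ≤ I₃)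
    (u₁ u₂ u₃ d₁ d₂ d₃ s : ℝ)
    (hD : 0 < heron (lsq I₁ (u₂ + s * d₂) (u₃ + s * d₃)) (lsq I₂ (u₃ + s * d₃) (u₁ + s * d₁))
      (lsq I₃ (u₁ + s * d₁) (u₂ + s * d₂))) :
    ∃ Q : ℝ, HasDerivAt (fun t => triPair I₁ I₂ I₃ (u₁ + t * d₁) (u₂ + t * d₂) (u₃ + t * d₃)
      d₁ d₂ d₃) Q s ∧ Q ≤ 0 ∧ (¬ (d₁ = d₂ ∧ d₂ = d₃) → Q < 0) := by
  have ha := hasDerivAt_lsq I₁ u₂ u₃ d₂ d₃ s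
  have hb := hasDerivAt_lsq I₂ u₃ u₁ d₃ d₁ s
  have hc := hasDerivAt_lsq I₃ u₁ u₂ d₁ d₂ s
  have ha0 := lsq_pos h₁ (u₂ + s * d₂) (u₃ + s * d₃)
  have hb0 := lsq_pos h₂ (u₃ + s * d₃) (u₁ + s * d₁)
  have hc0 := lsq_pos h₃ (u₁ + s * d₁) (u₂ + s * d₂)
  have A := (hasDerivAt_ang ha hb hc hb0 hc0 hD).const_mul d₁
  have B := (hasDerivAt_ang hb hc ha hc0 ha0 (by rwa [heron_rot])).const_mul d₂
  have C := (hasDerivAt_ang hc ha hb ha0 hb0 (by rwa [heron_rot, heron_rot])).const_mul d₃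
  rw [heron_rot] at B
  rw [heron_rot, heron_rot] at C
  have hR := sqrt_pos.2 hD
  have hs := tri_deriv_sign (d₁ := d₁) (d₂ := d₂) (d₃ := d₃)
    (p := exp (u₁ + s * d₁) ^ 2) (q := exp (u₂ + s * d₂) ^ 2)
    (r := exp (u₃ + s * d₃) ^ 2) (x := exp (u₂ + s * d₂) * exp (u₃ + s * d₃) * I₁)
    (y := exp (u₃ + s * d₃) * exp (u₁ + s * d₁) * I₂)
    (z := exp (u₁ + s * d₁) * exp (u₂ + s * d₂) * I₃) (by positivity) (by positivity)
    (by positivity) (by positivity) (by positivity) (by positivity)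
    (by unfold lsq; ring) (by unfold lsq; ring) (by unfold lsq; ring) hD rfl rfl rfl
  refine ⟨_, (A.add B).add C, ?_, ?_⟩
  · rw [← mul_div_assoc, ← mul_div_assoc, ← mul_div_assoc, ← add_div, ← add_div]
    exact div_nonpos_of_nonpos_of_nonneg hs.1 hR.le
  · intro h
    rw [← mul_div_assoc, ← mul_div_assoc, ← mul_div_assoc, ← add_div, ← add_div]
    exact div_neg_of_neg_of_pos (hs.2 h) hR

theorem continuous_ang_lsq {I₁ I₂ I₃ : ℝ} (h₂ : 0 ≤ I₂) (h₃ : 0 ≤ I₃) {x y z : ℝ → ℝ}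
    (hx : Continuous x) (hy : Continuous y) (hz : Continuous z) :
    Continuous fun t => ang (lsq I₁ (y t) (z t)) (lsq I₂ (z t) (x t)) (lsq I₃ (x t) (y t)) := by
  have key : ∀ I : ℝ, ∀ {v w : ℝ → ℝ}, Continuous v → Continuous w →
      Continuous fun t => lsq I (v t) (w t) := by
    intro I v w hv hw; unfold lsq; fun_prop
  unfold ang cosOf
  refine continuous_arccos.comp (Continuous.div ?_ ?_ fun t => ?_)
  · exact ((key _ hx hy).add (key _ hz hx)).sub (key _ hy hz)
  · exact ((key _ hx hy).sqrt.const_mul 2).mul (key _ hz hx).sqrt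
  · have := sqrt_pos.2 (lsq_pos h₃ (x t) (y t))
    have := sqrt_pos.2 (lsq_pos h₂ (z t) (x t))
    positivity

/-- The generalized angles form a monotone (decreasing) operator on all of `ℝ³`, not only on the
region of nondegenerate triangles, which need not be convex. -/
theorem triPair_antitone {I₁ I₂ I₃ : ℝ} (h₁ : 0 ≤ I₁) (h₂ : 0 ≤ I₂) (h₃ : 0 ≤ I₃)
    (u₁ u₂ u₃ d₁ d₂ d₃ : ℝ) :
    Antitone fun t => triPair I₁ I₂ I₃ (u₁ + t * d₁) (u₂ + t * d₂) (u₃ + t * d₃) d₁ d₂ d₃ := by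
  have hcont : Continuous fun t =>
      triPair I₁ I₂ I₃ (u₁ + t * d₁) (u₂ + t * d₂) (u₃ + t * d₃) d₁ d₂ d₃ := by
    unfold triPair
    refine ((continuous_const.mul (continuous_ang_lsq h₂ h₃ ?_ ?_ ?_)).add
      (continuous_const.mul (continuous_ang_lsq h₃ h₁ ?_ ?_ ?_))).add
      (continuous_const.mul (continuous_ang_lsq h₁ h₂ ?_ ?_ ?_)) <;> fun_prop
  have hS : ((fun v : ℝ × ℝ × ℝ => d₁ * v.1 + d₂ * v.2.1 + d₃ * v.2.2) ''
      (({0, π} : Set ℝ) ×ˢ (({0, π} : Set ℝ) ×ˢ ({0, π} : Set ℝ)))).Finite :=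
    ((Set.toFinite _).prod ((Set.toFinite _).prod (Set.toFinite _))).image _
  refine antitone_of_locally hcont hS fun t => ?_
  set H : ℝ → ℝ := fun s => heron (lsq I₁ (u₂ + s * d₂) (u₃ + s * d₃))
    (lsq I₂ (u₃ + s * d₃) (u₁ + s * d₁)) (lsq I₃ (u₁ + s * d₁) (u₂ + s * d₂)) with hH
  have hHc : Continuous H := by
    simp only [hH, heron, lsq]; fun_prop
  rcases lt_or_ge 0 (H t) with hD | hD
  · right
    obtain ⟨δ, hδ, hball⟩ := Metric.eventually_nhds_iff.1 ((hHc.tendsto t).eventually (lt_mem_nhds hD))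
    refine ⟨δ / 2, by positivity, ?_⟩
    have hd : ∀ s ∈ Set.Icc t (t + δ / 2), 0 < H s := fun s hs => hball (by
      rw [Real.dist_eq, abs_lt]; constructor <;> linarith [hs.1, hs.2])
    refine antitoneOn_of_deriv_nonpos (convex_Icc _ _) hcont.continuousOn ?_ ?_
    · intro s hs
      rw [interior_Icc] at hs
      obtain ⟨Q, hQ, -⟩ := hasDerivAt_triPair h₁ h₂ h₃ u₁ u₂ u₃ d₁ d₂ d₃ s
        (hd s ⟨hs.1.le, hs.2.le⟩)
      exact hQ.differentiableAt.differentiableWithinAt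
    · intro s hs
      rw [interior_Icc] at hs
      obtain ⟨Q, hQ, hQ0, -⟩ := hasDerivAt_triPair h₁ h₂ h₃ u₁ u₂ u₃ d₁ d₂ d₃ s
        (hd s ⟨hs.1.le, hs.2.le⟩)
      rwa [hQ.deriv]
  · left
    have ha0 := lsq_pos h₁ (u₂ + t * d₂) (u₃ + t * d₃)
    have hb0 := lsq_pos h₂ (u₃ + t * d₃) (u₁ + t * d₁)
    have hc0 := lsq_pos h₃ (u₁ + t * d₁) (u₂ + t * d₂)
    exact ⟨(_, _, _), ⟨ang_mem hb0 hc0 hD, ang_mem hc0 ha0 (by rwa [heron_rot]),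
      ang_mem ha0 hb0 (by rwa [heron_rot, heron_rot])⟩, rfl⟩

/-! ### The extended curvature map -/

theorem Lam_eq_arccos (x : ℝ) : Lam x = arccos x := by
  unfold Lam
  split_ifs with h1 h2
  · exact (arccos_of_le_neg_one h1).symm
  · rfl
  · exact (arccos_of_one_le (not_le.1 h2).le).symm

theorem K_eq_Kt (Fc : Finset (Finset (Fin N))) (I : Finset (Fin N) → ℝ) (r : Fin N → ℝ) :
    K Fc I r = Kt Fc I r := by
  funext i
  simp only [K, Kt, Lam_eq_arccos]

theorem face_distinct {Fc : Finset (Finset (Fin N))} (hT : IsTriangulation Fc) {i j k : Fin N}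
    (h : ({i, j, k} : Finset (Fin N)) ∈ Fc) : i ≠ j ∧ i ≠ k ∧ j ≠ k := by
  have h3 := hT.card3 _ h
  refine ⟨?_, ?_, ?_⟩ <;> rintro rfl
  · have := Finset.card_le_two (a := i) (b := k); simp at h3; omega
  · have := Finset.card_le_two (a := i) (b := j); rw [Finset.pair_comm j i] at h3; simp at h3; omega
  · have := Finset.card_le_two (a := i) (b := j); simp at h3; omega

theorem face_rot {i j k : Fin N} : ({i, j, k} : Finset (Fin N)) = {j, k, i} := by
  ext x; simp only [Finset.mem_insert, Finset.mem_singleton]; tauto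

theorem face_edge {Fc : Finset (Finset (Fin N))} (hT : IsTriangulation Fc) {i j k : Fin N}
    (h : ({i, j, k} : Finset (Fin N)) ∈ Fc) : ({i, j} : Finset (Fin N)) ∈ edges Fc := by
  refine Finset.mem_biUnion.2 ⟨_, h, Finset.mem_powersetCard.2 ⟨?_, ?_⟩⟩
  · intro x; simp only [Finset.mem_insert, Finset.mem_singleton]; tauto
  · exact Finset.card_pair (face_distinct hT h).1

theorem face_I_nonneg {Fc : Finset (Finset (Fin N))} (hT : IsTriangulation Fc)
    {I : Finset (Fin N) → ℝ} (hI : ∀ e ∈ edges Fc, 0 ≤ I e) {i j k : Fin N}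
    (h : ({i, j, k} : Finset (Fin N)) ∈ Fc) : 0 ≤ I {j, k} ∧ 0 ≤ I {k, i} ∧ 0 ≤ I {i, j} := by
  have h2 : ({j, k, i} : Finset (Fin N)) ∈ Fc := by rwa [← face_rot]
  have h3 : ({k, i, j} : Finset (Fin N)) ∈ Fc := by rwa [← face_rot]
  exact ⟨hI _ (face_edge hT h2), hI _ (face_edge hT h3), hI _ (face_edge hT h)⟩

theorem len_eq (I : Finset (Fin N) → ℝ) (u : Fin N → ℝ) (i j : Fin N) :
    len I (rOf u) i j = √(lsq (I {i, j}) (u i) (u j)) := rfl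

theorem len_comm (I : Finset (Fin N) → ℝ) (u : Fin N → ℝ) (i j : Fin N) :
    len I (rOf u) i j = len I (rOf u) j i := by
  rw [len_eq, len_eq, Finset.pair_comm, lsq_comm]

theorem cosAng_eq {I : Finset (Fin N) → ℝ} (u : Fin N → ℝ) {i j k : Fin N}
    (h₁ : 0 ≤ I {j, k}) (h₂ : 0 ≤ I {k, i}) (h₃ : 0 ≤ I {i, j}) :
    cosAng I (rOf u) i j k = cosOf (lsq (I {j, k}) (u j) (u k)) (lsq (I {k, i}) (u k) (u i))
      (lsq (I {i, j}) (u i) (u j)) := by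
  rw [cosAng, cosOf, len_comm I u i k, len_eq, len_eq, len_eq, sq_sqrt (lsq_pos h₁ _ _).le,
    sq_sqrt (lsq_pos h₂ _ _).le, sq_sqrt (lsq_pos h₃ _ _).le]

theorem Kt_eq {Fc : Finset (Finset (Fin N))} (hT : IsTriangulation Fc)
    {I : Finset (Fin N) → ℝ} (hI : ∀ e ∈ edges Fc, 0 ≤ I e) (u : Fin N → ℝ) (i : Fin N) :
    Kt Fc I (rOf u) i = 2 * π - (1 / 2) * ∑ j, ∑ k,
      (if ({i, j, k} : Finset (Fin N)) ∈ Fc then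
        ang (lsq (I {j, k}) (u j) (u k)) (lsq (I {k, i}) (u k) (u i))
          (lsq (I {i, j}) (u i) (u j)) else 0) := by
  rw [Kt]
  congr 3; funext j; congr 1; funext k
  split_ifs with h
  · obtain ⟨h₁, h₂, h₃⟩ := face_I_nonneg hT hI h
    rw [Lam_eq_arccos, cosAng_eq u h₁ h₂ h₃, ang]
  · rfl

theorem sum_rot (g : Fin N → Fin N → Fin N → ℝ) :
    ∑ i, ∑ j, ∑ k, g j k i = ∑ i, ∑ j, ∑ k, g i j k := by
  rw [Finset.sum_comm]
  refine Finset.sum_congr rfl fun j _ => ?_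
  rw [Finset.sum_comm]

/-- The pairing of `d` with the extended curvature, as a sum over faces. Each face appears once for
each of the six orderings of its vertices, whence the factor `1 / 6`. -/
theorem sum_mul_Kt {Fc : Finset (Finset (Fin N))} (hT : IsTriangulation Fc)
    {I : Finset (Fin N) → ℝ} (hI : ∀ e ∈ edges Fc, 0 ≤ I e) (u d : Fin N → ℝ) :
    ∑ i, d i * Kt Fc I (rOf u) i = 2 * π * ∑ i, d i - (1 / 6) * ∑ i, ∑ j, ∑ k,
      (if ({i, j, k} : Finset (Fin N)) ∈ Fc then
        triPair (I {j, k}) (I {k, i}) (I {i, j}) (u i) (u j) (u k) (d i) (d j) (d k)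
        else 0) := by
  set g : Fin N → Fin N → Fin N → ℝ := fun i j k =>
    if ({i, j, k} : Finset (Fin N)) ∈ Fc then
      d i * ang (lsq (I {j, k}) (u j) (u k)) (lsq (I {k, i}) (u k) (u i))
        (lsq (I {i, j}) (u i) (u j)) else 0 with hg
  have h1 : ∑ i, d i * Kt Fc I (rOf u) i =
      2 * π * ∑ i, d i - (1 / 2) * ∑ i, ∑ j, ∑ k, g i j k := by
    rw [Finset.mul_sum, Finset.mul_sum, ← Finset.sum_sub_distrib]
    refine Finset.sum_congr rfl fun i _ => ?_
    rw [Kt_eq hT hI, mul_sub, mul_comm (d i) (2 * π), mul_left_comm, Finset.mul_sum]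
    simp only [Finset.mul_sum, hg, mul_ite, mul_zero]
  have h2 : ∀ i j k, (if ({i, j, k} : Finset (Fin N)) ∈ Fc then
        triPair (I {j, k}) (I {k, i}) (I {i, j}) (u i) (u j) (u k) (d i) (d j) (d k)
        else 0) = g i j k + g j k i + g k i j := by
    intro i j k
    simp only [hg, triPair]
    rw [← face_rot (i := i) (j := j) (k := k), face_rot (i := k) (j := i) (k := j)]
    split_ifs <;> simp
  simp only [h2, Finset.sum_add_distrib]
  rw [h1, sum_rot g, sum_rot (fun i j k => g j k i), sum_rot g]
  ring

/-- The total extended curvature does not depend on the radii, by `ang_sum`. -/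
theorem sum_Kt_const {Fc : Finset (Finset (Fin N))} (hT : IsTriangulation Fc)
    {I : Finset (Fin N) → ℝ} (hI : ∀ e ∈ edges Fc, 0 ≤ I e) (u v : Fin N → ℝ) :
    ∑ i, Kt Fc I (rOf u) i = ∑ i, Kt Fc I (rOf v) i := by
  have h := sum_mul_Kt hT hI u 1
  have h' := sum_mul_Kt hT hI v 1
  simp only [Pi.one_apply, one_mul] at h h'
  rw [h, h']
  congr 2
  refine Finset.sum_congr rfl fun i _ => Finset.sum_congr rfl fun j _ =>
    Finset.sum_congr rfl fun k _ => ?_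
  split_ifs with hf
  · obtain ⟨h₁, h₂, h₃⟩ := face_I_nonneg hT hI hf
    simp only [triPair, one_mul]
    rw [ang_sum (lsq_pos h₁ _ _) (lsq_pos h₂ _ _) (lsq_pos h₃ _ _),
      ang_sum (lsq_pos h₁ _ _) (lsq_pos h₂ _ _) (lsq_pos h₃ _ _)]
  · rfl

theorem Kt_line_monotone {Fc : Finset (Finset (Fin N))} (hT : IsTriangulation Fc)
    {I : Finset (Fin N) → ℝ} (hI : ∀ e ∈ edges Fc, 0 ≤ I e) (u d : Fin N → ℝ) :
    Monotone fun t : ℝ => ∑ i, d i * Kt Fc I (rOf (u + t • d)) i := by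
  intro s t hst
  simp only [sum_mul_Kt hT hI]
  gcongr with i _ j _ k _
  split_ifs with hf
  · obtain ⟨h₁, h₂, h₃⟩ := face_I_nonneg hT hI hf
    exact triPair_antitone h₁ h₂ h₃ (u i) (u j) (u k) (d i) (d j) (d k) hst
  · rfl

theorem heron_pos_of_Omega {Fc : Finset (Finset (Fin N))} (hT : IsTriangulation Fc)
    {I : Finset (Fin N) → ℝ} (hI : ∀ e ∈ edges Fc, 0 ≤ I e) {u : Fin N → ℝ}
    (hu : rOf u ∈ Omega Fc I) {i j k : Fin N} (hf : ({i, j, k} : Finset (Fin N)) ∈ Fc) :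
    0 < heron (lsq (I {j, k}) (u j) (u k)) (lsq (I {k, i}) (u k) (u i))
      (lsq (I {i, j}) (u i) (u j)) := by
  obtain ⟨h₁, h₂, h₃⟩ := face_I_nonneg hT hI hf
  have t₁ := hu.2 i j k hf
  have t₂ := hu.2 j k i (by rwa [← face_rot])
  have t₃ := hu.2 k i j (by rwa [face_rot])
  rw [len_comm I u i k] at t₁
  rw [len_comm I u j i] at t₂
  rw [len_comm I u k j] at t₃
  simp only [len_eq] at t₁ t₂ t₃
  have ea := sq_sqrt (lsq_pos h₁ (u j) (u k)).le
  have eb := sq_sqrt (lsq_pos h₂ (u k) (u i)).le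
  have ec := sq_sqrt (lsq_pos h₃ (u i) (u j)).le
  rw [← ea, ← eb, ← ec]
  generalize √(lsq (I {j, k}) (u j) (u k)) = a at *
  generalize √(lsq (I {k, i}) (u k) (u i)) = b at *
  generalize √(lsq (I {i, j}) (u i) (u j)) = c at *
  have e : heron (a ^ 2) (b ^ 2) (c ^ 2) = (a + b + c) * (b + c - a) * (c + a - b) * (a + b - c) := by
    unfold heron; ring
  rw [e]
  have p1 : 0 < b + c - a := by linarith
  have p2 : 0 < c + a - b := by linarith
  have p3 : 0 < a + b - c := by linarith
  have p4 : 0 < a + b + c := by linarith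
  positivity

theorem eq_const_of_faces {Fc : Finset (Finset (Fin N))} (hT : IsTriangulation Fc) {d : Fin N → ℝ}
    (h : ∀ i j k, ({i, j, k} : Finset (Fin N)) ∈ Fc → d i = d j ∧ d j = d k) (i j : Fin N) :
    d i = d j := by
  have hadj : ∀ i j, ({i, j} : Finset (Fin N)) ∈ edges Fc → i ≠ j → d i = d j := by
    intro i j hij hne
    obtain ⟨f, hf, hsub⟩ := Finset.mem_biUnion.1 hij
    have hsub' := (Finset.mem_powersetCard.1 hsub).1
    obtain ⟨k, hk⟩ : ∃ k, f = {k, i, j} := by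
      have hc : (f \ {i, j}).card = 1 := by
        rw [Finset.card_sdiff_of_subset hsub', hT.card3 f hf, Finset.card_pair hne]
      obtain ⟨k, hk⟩ := Finset.card_eq_one.1 hc
      refine ⟨k, ?_⟩
      rw [Finset.insert_eq, ← hk, Finset.sdiff_union_of_subset hsub']
    exact (h k i j (hk ▸ hf)).2
  obtain ⟨w⟩ := hT.conn.preconnected i j
  induction w with
  | nil => rfl
  | cons hvw _ ih =>
    rw [← ih]
    rw [SimpleGraph.fromRel_adj] at hvw
    rcases hvw.2 with h' | h'
    · exact hadj _ _ h' hvw.1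
    · exact (hadj _ _ h' hvw.1.symm).symm

/-- At a nondegenerate metric the derivative of the extended curvature is positive definite modulo
constants: a direction in its kernel is constant on each face, hence constant by connectedness. -/
theorem Kt_line_deriv_pos {Fc : Finset (Finset (Fin N))} (hT : IsTriangulation Fc)
    {I : Finset (Fin N) → ℝ} (hI : ∀ e ∈ edges Fc, 0 ≤ I e) {u : Fin N → ℝ}
    (hu : rOf u ∈ Omega Fc I) (d : Fin N → ℝ) (hd : ¬ ∀ i j, d i = d j) :
    ∃ Q, HasDerivAt (fun t : ℝ => ∑ i, d i * Kt Fc I (rOf (u + t • d)) i) Q 0 ∧ 0 < Q := by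
  have key : ∀ i j k, ∃ q, HasDerivAt (fun t : ℝ => if ({i, j, k} : Finset (Fin N)) ∈ Fc then
        triPair (I {j, k}) (I {k, i}) (I {i, j}) ((u + t • d) i) ((u + t • d) j) ((u + t • d) k)
          (d i) (d j) (d k) else 0) q 0 ∧ q ≤ 0 ∧
        (({i, j, k} : Finset (Fin N)) ∈ Fc → ¬ (d i = d j ∧ d j = d k) → q < 0) := by
    intro i j k
    by_cases hf : ({i, j, k} : Finset (Fin N)) ∈ Fc
    · obtain ⟨h₁, h₂, h₃⟩ := face_I_nonneg hT hI hf
      obtain ⟨q, hq, hq0, hq1⟩ := hasDerivAt_triPair h₁ h₂ h₃ (u i) (u j) (u k) (d i) (d j) (d k) 0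
        (by simpa using heron_pos_of_Omega hT hI hu hf)
      exact ⟨q, by simp only [if_pos hf]; exact hq, hq0, fun _ => hq1⟩
    · exact ⟨0, by simpa only [if_neg hf] using hasDerivAt_const _ _, le_rfl, fun h => absurd h hf⟩
  choose q hq hq0 hq1 using key
  refine ⟨0 - (1 / 6) * ∑ i, ∑ j, ∑ k, q i j k, ?_, ?_⟩
  · simp only [sum_mul_Kt hT hI]
    refine (hasDerivAt_const _ _).sub (HasDerivAt.const_mul _ ?_)
    exact HasDerivAt.fun_sum fun i _ => HasDerivAt.fun_sum fun j _ => HasDerivAt.fun_sum fun k _ =>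
      hq i j k
  · have hex : ∃ i j k, ({i, j, k} : Finset (Fin N)) ∈ Fc ∧ ¬ (d i = d j ∧ d j = d k) := by
      by_contra! hcon
      exact hd (eq_const_of_faces hT fun i j k hf => by
        have := hcon i j k hf; tauto)
    obtain ⟨i, j, k, hf, hne⟩ := hex
    have : ∑ i, ∑ j, ∑ k, q i j k < 0 := by
      refine Finset.sum_neg' (fun i _ => Finset.sum_nonpos fun j _ => Finset.sum_nonpos fun k _ =>
        hq0 i j k) ⟨i, Finset.mem_univ _, ?_⟩
      refine Finset.sum_neg' (fun j _ => Finset.sum_nonpos fun k _ => hq0 i j k)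
        ⟨j, Finset.mem_univ _, ?_⟩
      exact Finset.sum_neg' (fun k _ => hq0 i j k) ⟨k, Finset.mem_univ _, hq1 i j k hf hne⟩
    linarith

/-! ### Strong monotonicity at a nondegenerate metric -/

theorem differentiableAt_Kt {Fc : Finset (Finset (Fin N))} (hT : IsTriangulation Fc)
    {I : Finset (Fin N) → ℝ} (hI : ∀ e ∈ edges Fc, 0 ≤ I e) {u : Fin N → ℝ}
    (hu : rOf u ∈ Omega Fc I) :
    DifferentiableAt ℝ (fun v : Fin N → ℝ => fun i => Kt Fc I (rOf v) i) u := by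
  rw [differentiableAt_pi]
  intro i
  simp only [Kt_eq hT hI]
  refine (differentiableAt_const _).sub (DifferentiableAt.const_mul ?_ _)
  refine DifferentiableAt.fun_sum fun j _ => DifferentiableAt.fun_sum fun k _ => ?_
  by_cases hf : ({i, j, k} : Finset (Fin N)) ∈ Fc
  · simp only [if_pos hf]
    obtain ⟨h₁, h₂, h₃⟩ := face_I_nonneg hT hI hf
    have hb0 := lsq_pos h₂ (u k) (u i)
    have hc0 := lsq_pos h₃ (u i) (u j)
    have hlt := abs_cosOf_lt hb0 hc0 (heron_pos_of_Omega hT hI hu hf)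
    have hl : ∀ (e : ℝ) (i j : Fin N), DifferentiableAt ℝ
        (fun v : Fin N → ℝ => lsq e (v i) (v j)) u := by
      intro e i j; unfold lsq; fun_prop
    refine ((hasDerivAt_arccos hlt.1.ne' hlt.2.ne).differentiableAt).comp u ?_
    unfold cosOf
    simp only [div_eq_mul_inv]
    refine (((hl _ _ _).add (hl _ _ _)).sub (hl _ _ _)).mul (DifferentiableAt.inv ?_ ?_)
    · exact (((hl _ _ _).sqrt hc0.ne').const_mul 2).mul ((hl _ _ _).sqrt hb0.ne')
    · have := sqrt_pos.2 hb0
      have := sqrt_pos.2 hc0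
      positivity
  · simp only [if_neg hf]
    exact differentiableAt_const _

/-- Strong monotonicity of the extended curvature near a nondegenerate metric, along the hyperplane
`∑ d i = 0`, from the first-order expansion and `Kt_line_deriv_pos`. -/
theorem Kt_local_strong {Fc : Finset (Finset (Fin N))} (hT : IsTriangulation Fc)
    {I : Finset (Fin N) → ℝ} (hI : ∀ e ∈ edges Fc, 0 ≤ I e) {u : Fin N → ℝ}
    (hu : rOf u ∈ Omega Fc I) :
    ∃ c > 0, ∃ ε > 0, ∀ d : Fin N → ℝ, ∑ i, d i = 0 → ‖d‖ < ε →
      c * ‖d‖ ^ 2 ≤ ∑ i, d i * (Kt Fc I (rOf (u + d)) i - Kt Fc I (rOf u) i) := by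
  have : Nonempty (Fin N) := hT.conn.nonempty
  have hN : (0 : ℝ) < N := by
    have := Fin.pos_iff_nonempty.2 this
    exact_mod_cast this
  set G : (Fin N → ℝ) → (Fin N → ℝ) := fun v i => Kt Fc I (rOf v) i with hG
  have hdiff : DifferentiableAt ℝ G u := differentiableAt_Kt hT hI hu
  set L := fderiv ℝ G u with hL
  set q : (Fin N → ℝ) → ℝ := fun d => ∑ i, d i * L d i with hq
  have hqc : Continuous q := by
    refine continuous_finsetSum _ fun i _ => (continuous_apply i).mul ?_
    exact (continuous_apply i).comp L.continuous
  have hqpos : ∀ d : Fin N → ℝ, ∑ i, d i = 0 → d ≠ 0 → 0 < q d := by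
    intro d hd hd0
    obtain ⟨Q, hQ, hQ0⟩ := Kt_line_deriv_pos hT hI hu d (by
      intro hc
      apply hd0
      obtain ⟨j⟩ := this
      have h1 : ∑ i, d i = N * d j := by
        rw [Finset.sum_congr rfl fun i _ => hc i j]; simp
      funext i
      rw [hc i j]
      rw [hd] at h1
      rcases mul_eq_zero.1 h1.symm with h | h
      · exact absurd h hN.ne'
      · simpa using h)
    have hline : HasDerivAt (fun t : ℝ => u + t • d) d 0 := by
      simpa using ((hasDerivAt_id (0 : ℝ)).smul_const d).const_add u
    have hGd : HasDerivAt (fun t : ℝ => G (u + t • d)) (L d) 0 := by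
      have : HasFDerivAt G L (u + (0 : ℝ) • d) := by simpa using hdiff.hasFDerivAt
      exact this.comp_hasDerivAt 0 hline
    have h2 : HasDerivAt (fun t : ℝ => ∑ i, d i * G (u + t • d) i) (q d) 0 :=
      HasDerivAt.fun_sum fun i _ => ((hasDerivAt_pi.1 hGd) i).const_mul (d i)
    rw [h2.unique hQ]; exact hQ0
  -- uniform lower bound by compactness of the unit sphere of the hyperplane
  obtain ⟨c, hc, hcq⟩ : ∃ c > 0, ∀ d : Fin N → ℝ, ∑ i, d i = 0 → c * ‖d‖ ^ 2 ≤ q d := by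
    have hcpt : IsCompact (Metric.sphere (0 : Fin N → ℝ) 1 ∩ {d | ∑ i, d i = 0}) :=
      (isCompact_sphere _ _).inter_right (isClosed_eq (by fun_prop) continuous_const)
    have hc : ∃ c > 0, ∀ d ∈ Metric.sphere (0 : Fin N → ℝ) 1 ∩ {d | ∑ i, d i = 0}, c ≤ q d := by
      rcases (Metric.sphere (0 : Fin N → ℝ) 1 ∩ {d | ∑ i, d i = 0}).eq_empty_or_nonempty with h | h
      · exact ⟨1, one_pos, by simp [h]⟩
      · obtain ⟨d, ⟨hd1, hd2⟩, hmin⟩ := hcpt.exists_isMinOn h hqc.continuousOn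
        refine ⟨q d, hqpos d hd2 ?_, fun e he => hmin he⟩
        rintro rfl; simp at hd1
    obtain ⟨c, hc, h⟩ := hc
    refine ⟨c, hc, fun d hd => ?_⟩
    rcases eq_or_ne d 0 with rfl | hd0
    · simp [hq]
    have hn := norm_pos_iff.2 hd0
    have h1 := h (‖d‖⁻¹ • d) ⟨by simp [norm_smul, hn.ne'], by
      simp [← Finset.mul_sum, hd]⟩
    have h2 : q (‖d‖⁻¹ • d) = (‖d‖ ^ 2)⁻¹ * q d := by
      simp only [hq, map_smul, Pi.smul_apply, smul_eq_mul, Finset.mul_sum]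
      refine Finset.sum_congr rfl fun i _ => by ring
    rw [h2, inv_mul_eq_div, le_div_iff₀ (by positivity)] at h1
    exact h1
  have hlo := hdiff.hasFDerivAt.isLittleO
  rw [Asymptotics.isLittleO_iff] at hlo
  have hlo' := hlo (c := c / (2 * N)) (by positivity)
  obtain ⟨ε, hε, hball⟩ := Metric.eventually_nhds_iff.1 hlo'
  refine ⟨c / 2, by positivity, ε, hε, fun d hd hdε => ?_⟩
  have hrem := @hball (u + d) (by simpa [dist_eq_norm] using hdε)
  simp only [add_sub_cancel_left] at hrem
  set R := G (u + d) - G u - L d with hR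
  have e : ∑ i, d i * (Kt Fc I (rOf (u + d)) i - Kt Fc I (rOf u) i) = q d + ∑ i, d i * R i := by
    rw [hq, ← Finset.sum_add_distrib]
    refine Finset.sum_congr rfl fun i _ => ?_
    simp only [hR, hG, Pi.sub_apply]; ring
  have hb : |∑ i, d i * R i| ≤ c / 2 * ‖d‖ ^ 2 := by
    calc |∑ i, d i * R i| ≤ ∑ i, |d i * R i| := Finset.abs_sum_le_sum_abs _ _
      _ ≤ ∑ _i : Fin N, ‖d‖ * (c / (2 * N) * ‖d‖) := by
          refine Finset.sum_le_sum fun i _ => ?_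
          rw [abs_mul]
          exact mul_le_mul (norm_le_pi_norm d i) ((norm_le_pi_norm R i).trans hrem)
            (abs_nonneg _) (norm_nonneg _)
      _ = c / 2 * ‖d‖ ^ 2 := by
          rw [Finset.sum_const, Finset.card_univ, Fintype.card_fin, nsmul_eq_mul]
          field_simp
  rw [e]
  have := hcq d hd
  have := neg_le_of_abs_le hb
  linarith

/-- Strong monotonicity relative to a nondegenerate metric, on balls of any radius: the pairing is
nondecreasing along rays, so the local estimate propagates at the cost of a smaller constant. -/
theorem Kt_strong {Fc : Finset (Finset (Fin N))} (hT : IsTriangulation Fc)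
    {I : Finset (Fin N) → ℝ} (hI : ∀ e ∈ edges Fc, 0 ≤ I e) {u : Fin N → ℝ}
    (hu : rOf u ∈ Omega Fc I) (R : ℝ) :
    ∃ c > 0, ∀ d : Fin N → ℝ, ∑ i, d i = 0 → ‖d‖ ≤ R →
      c * ‖d‖ ^ 2 ≤ ∑ i, d i * (Kt Fc I (rOf (u + d)) i - Kt Fc I (rOf u) i) := by
  obtain ⟨c, hc, ε, hε, hloc⟩ := Kt_local_strong hT hI hu
  -- the point `u + τ • d` of the segment lies in the `ε`-ball
  set τ : ℝ := ε / (|R| + 1 + ε) with hτ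
  have hτ0 : 0 < τ := by positivity
  have hτ1 : τ ≤ 1 := (div_le_one (by positivity)).2 (by linarith [abs_nonneg R])
  refine ⟨c * τ, by positivity, fun d hd hdR => ?_⟩
  have hsmall : ‖τ • d‖ < ε := by
    rw [norm_smul, norm_of_nonneg hτ0.le, hτ, div_mul_eq_mul_div, div_lt_iff₀ (by positivity)]
    have : ‖d‖ < |R| + 1 + ε := by linarith [le_abs_self R]
    gcongr
  have h1 := hloc (τ • d) (by simp [← Finset.mul_sum, hd]) hsmall
  have h2 := Kt_line_monotone hT hI u d hτ1
  simp only [one_smul] at h2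
  rw [norm_smul, norm_of_nonneg hτ0.le] at h1
  have e : ∑ i, (τ • d) i * (Kt Fc I (rOf (u + τ • d)) i - Kt Fc I (rOf u) i) =
      τ * ∑ i, d i * (Kt Fc I (rOf (u + τ • d)) i - Kt Fc I (rOf u) i) := by
    rw [Finset.mul_sum]
    refine Finset.sum_congr rfl fun i _ => by simp [mul_assoc]
  rw [e, show c * (τ * ‖d‖) ^ 2 = τ * (c * τ * ‖d‖ ^ 2) by ring] at h1
  have h3 := le_of_mul_le_mul_left h1 hτ0
  simp only [mul_sub, Finset.sum_sub_distrib] at h3 ⊢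
  linarith

/-! ### The term `s_α r_i ^ α` -/

/-- The softmax map is monotone. -/
theorem softmax_monotone [Nonempty (Fin N)] (x y : Fin N → ℝ) :
    0 ≤ ∑ i, (x i - y i) *
      (exp (x i) / ∑ j, exp (x j) - exp (y i) / ∑ j, exp (y j)) := by
  set X := ∑ j, exp (x j) with hX
  set Y := ∑ j, exp (y j) with hY
  have hX0 : 0 < X := Finset.sum_pos (fun i _ => exp_pos _) Finset.univ_nonempty
  have hY0 : 0 < Y := Finset.sum_pos (fun i _ => exp_pos _) Finset.univ_nonempty
  have h0 : ∑ i, (exp (x i) / X - exp (y i) / Y) = 0 := by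
    rw [Finset.sum_sub_distrib, ← Finset.sum_div, ← Finset.sum_div, ← hX, ← hY,
      div_self hX0.ne', div_self hY0.ne', sub_self]
  -- shifting both vectors by constants turns the factors into `a - b` and `exp a - exp b`
  have e : ∑ i, (x i - y i) * (exp (x i) / X - exp (y i) / Y) =
      ∑ i, ((x i - log X) - (y i - log Y)) * (exp (x i - log X) - exp (y i - log Y)) := by
    simp only [exp_sub, exp_log hX0, exp_log hY0]
    have : ∑ i, (log X - log Y) * (exp (x i) / X - exp (y i) / Y) = 0 := by
      rw [← Finset.mul_sum, h0, mul_zero]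
    rw [← sub_eq_zero, ← Finset.sum_sub_distrib, ← this]
    exact Finset.sum_congr rfl fun i _ => by ring
  rw [e]
  refine Finset.sum_nonneg fun i _ => ?_
  rcases le_total (x i - log X) (y i - log Y) with h | h
  · exact mul_nonneg_of_nonpos_of_nonpos (sub_nonpos.2 h) (sub_nonpos.2 (exp_le_exp.2 h))
  · exact mul_nonneg (sub_nonneg.2 h) (sub_nonneg.2 (exp_le_exp.2 h))

theorem sA_mul_eq (Fc : Finset (Finset (Fin N))) (α : ℝ) (u : Fin N → ℝ) (i : Fin N) :
    sA Fc α (rOf u) * rOf u i ^ α =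
      2 * π * (chi Fc : ℝ) * (exp (α * u i) / ∑ j, exp (α * u j)) := by
  have : ∀ j, rOf u j ^ α = exp (α * u j) := fun j => by
    rw [rOf, ← exp_mul, mul_comm]
  simp only [sA, this]
  ring

theorem sum_sA_mul [Nonempty (Fin N)] (Fc : Finset (Finset (Fin N))) (α : ℝ) (u : Fin N → ℝ) :
    ∑ i, sA Fc α (rOf u) * rOf u i ^ α = 2 * π * (chi Fc : ℝ) := by
  have h0 : 0 < ∑ j, exp (α * u j) := Finset.sum_pos (fun i _ => exp_pos _) Finset.univ_nonempty
  simp only [sA_mul_eq]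
  rw [← Finset.mul_sum, ← Finset.sum_div, div_self h0.ne', mul_one]

theorem sA_antitone [Nonempty (Fin N)] {Fc : Finset (Finset (Fin N))} {α : ℝ}
    (hαχ : α * (chi Fc : ℝ) ≤ 0) (u v : Fin N → ℝ) :
    ∑ i, (u i - v i) *
      (sA Fc α (rOf u) * rOf u i ^ α - sA Fc α (rOf v) * rOf v i ^ α) ≤ 0 := by
  simp only [sA_mul_eq]
  rcases eq_or_ne α 0 with rfl | hα
  · simp
  have h := softmax_monotone (fun i => α * u i) (fun i => α * v i)
  have e : ∑ i, (u i - v i) *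
      (2 * π * (chi Fc : ℝ) * (exp (α * u i) / ∑ j, exp (α * u j)) -
        2 * π * (chi Fc : ℝ) * (exp (α * v i) / ∑ j, exp (α * v j))) =
      (2 * π * (α * (chi Fc : ℝ)) / α ^ 2) * ∑ i, (α * u i - α * v i) *
        (exp (α * u i) / ∑ j, exp (α * u j) - exp (α * v i) / ∑ j, exp (α * v j)) := by
    rw [Finset.mul_sum]
    refine Finset.sum_congr rfl fun i _ => ?_
    field_simp
  rw [e]
  refine mul_nonpos_of_nonpos_of_nonneg (div_nonpos_of_nonpos_of_nonneg ?_ (sq_nonneg _)) h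
  nlinarith [pi_pos]

/-! ### Convergence of the flow -/

theorem le_apply_zero_of_deriv_nonpos {f f' : ℝ → ℝ}
    (h : ∀ t ∈ Set.Ici (0 : ℝ), HasDerivWithinAt f (f' t) (Set.Ici 0) t)
    (h' : ∀ t ∈ Set.Ici (0 : ℝ), f' t ≤ 0) {t : ℝ} (ht : 0 ≤ t) : f t ≤ f 0 := by
  refine antitoneOn_of_hasDerivWithinAt_nonpos (convex_Ici 0)
    (fun t ht => (h t ht).continuousWithinAt) (f' := f') ?_ ?_ Set.self_mem_Ici ht ht
  · intro x hx
    exact (h x (interior_subset hx)).mono interior_subset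
  · intro x hx
    exact h' x (interior_subset hx)

/-- long-term convergence: assume αχ(M) ≤ 0 and that there is a
constant α-curvature metric r* ∈ Ω. Then every C¹ solution of the extended
α-flow on [0,∞) starting at a metric in Ω with the same product of radii as
r* converges exponentially fast to u* = ln r*. -/
theorem stmt12 {N : ℕ} (Fc : Finset (Finset (Fin N))) (hT : IsTriangulation Fc)
    (I : Finset (Fin N) → ℝ) (hI : ∀ e ∈ edges Fc, 0 ≤ I e) (α : ℝ)
    (hαχ : α * (chi Fc : ℝ) ≤ 0)
    (rstar : Fin N → ℝ) (hrs : rstar ∈ Omega Fc I)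
    (hconst : ∀ i : Fin N, K Fc I rstar i = sA Fc α rstar * rstar i ^ α)
    (u : ℝ → Fin N → ℝ) (hC1 : ContDiffOn ℝ 1 u (Set.Ici 0))
    (hu : IsExtFlowSol Fc I α (Set.Ici 0) u)
    (h0 : rOf (u 0) ∈ Omega Fc I)
    (hprod : (∏ i, Real.exp (u 0 i)) = ∏ i, rstar i) :
    ∃ C β : ℝ, 0 < C ∧ 0 < β ∧ ∀ t : ℝ, 0 ≤ t →
      ‖u t - fun i => Real.log (rstar i)‖ ≤ C * Real.exp (-β * t) := by
  have : Nonempty (Fin N) := hT.conn.nonempty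
  have hN : (0 : ℝ) < N := by
    have := Fin.pos_iff_nonempty.2 this
    exact_mod_cast this
  set w : Fin N → ℝ := fun i => Real.log (rstar i) with hw
  have hrw : rOf w = rstar := funext fun i => exp_log (hrs.1 i)
  rw [← hrw] at hrs hconst
  rw [K_eq_Kt] at hconst
  set d : ℝ → Fin N → ℝ := fun t => u t - w with hd
  set S : (Fin N → ℝ) → Fin N → ℝ := fun v i => sA Fc α (rOf v) * rOf v i ^ α with hS
  have hderiv : ∀ t ∈ Set.Ici (0 : ℝ), ∀ i, HasDerivWithinAt (fun s => d s i)
      (S (u t) i - Kt Fc I (rOf (u t)) i) (Set.Ici 0) t := fun t ht i => (hu t ht i).sub_const _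
  -- the constant total curvature is read off at the constant curvature metric
  have hKsum : ∀ v : Fin N → ℝ, ∑ i, Kt Fc I (rOf v) i = 2 * π * (chi Fc : ℝ) := by
    intro v
    rw [sum_Kt_const hT hI v w, Finset.sum_congr rfl fun i _ => hconst i, sum_sA_mul]
  have hd0 : ∑ i, d 0 i = 0 := by
    have := congrArg Real.log hprod
    rw [log_prod fun i _ => (exp_pos _).ne', ← hrw,
      log_prod fun i _ => (show rOf w i ≠ 0 from (exp_pos _).ne')] at this
    simp only [rOf, log_exp] at this
    simp [hd, this]
  have hdsum : ∀ t, 0 ≤ t → ∑ i, d t i = 0 := by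
    have hder : ∀ t ∈ Set.Ici (0 : ℝ),
        HasDerivWithinAt (fun s => ∑ i, d s i) 0 (Set.Ici 0) t := by
      intro t ht
      refine (HasDerivWithinAt.fun_sum fun i _ => hderiv t ht i).congr_deriv ?_
      rw [Finset.sum_sub_distrib, hKsum, sum_sA_mul, sub_self]
    intro t ht
    have h1 := le_apply_zero_of_deriv_nonpos hder (fun _ _ => le_rfl) ht
    have h2 := le_apply_zero_of_deriv_nonpos (fun t ht => (hder t ht).neg) (fun _ _ => by simp) ht
    simp only [Pi.neg_apply] at h2
    linarith
  -- the squared Euclidean distance to the constant curvature metric decreases along the flow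
  set f : ℝ → ℝ := fun t => ∑ i, d t i ^ 2 with hf
  set f' : ℝ → ℝ := fun t => 2 * ∑ i, d t i * (S (u t) i - Kt Fc I (rOf (u t)) i) with hf'
  have hfder : ∀ t ∈ Set.Ici (0 : ℝ), HasDerivWithinAt f (f' t) (Set.Ici 0) t := by
    intro t ht
    refine (HasDerivWithinAt.fun_sum fun i _ => (hderiv t ht i).pow 2).congr_deriv ?_
    simp only [hf', Finset.mul_sum]
    exact Finset.sum_congr rfl fun i _ => by simp [mul_assoc]
  have hbound : ∀ t, f' t ≤
      -2 * ∑ i, d t i * (Kt Fc I (rOf (w + d t)) i - Kt Fc I (rOf w) i) := by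
    intro t
    have h := sA_antitone hαχ (u t) w
    have e : w + d t = u t := by simp [hd]
    rw [e]
    have e2 : ∑ i, d t i * (S (u t) i - Kt Fc I (rOf (u t)) i) =
        ∑ i, (u t i - w i) * (S (u t) i - S w i) -
        ∑ i, d t i * (Kt Fc I (rOf (u t)) i - Kt Fc I (rOf w) i) := by
      rw [← Finset.sum_sub_distrib]
      refine Finset.sum_congr rfl fun i _ => ?_
      rw [hconst i]
      simp only [hd, hS, Pi.sub_apply]
      ring
    simp only [hf', e2]
    linarith
  have hnonpos : ∀ t ∈ Set.Ici (0 : ℝ), f' t ≤ 0 := by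
    intro t _
    have h := Kt_line_monotone hT hI w (d t) (zero_le_one' ℝ)
    simp only [zero_smul, add_zero, one_smul] at h
    have := hbound t
    simp only [mul_sub, Finset.sum_sub_distrib] at this
    linarith
  have hnorm : ∀ t, ‖d t‖ ^ 2 ≤ f t := by
    intro t
    have hf0 : 0 ≤ f t := Finset.sum_nonneg fun i _ => sq_nonneg _
    have : ‖d t‖ ≤ √(f t) := by
      refine (pi_norm_le_iff_of_nonneg (sqrt_nonneg _)).2 fun i => ?_
      refine abs_le_sqrt ?_
      exact Finset.single_le_sum (f := fun i => d t i ^ 2) (fun i _ => sq_nonneg _)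
        (Finset.mem_univ i)
    calc ‖d t‖ ^ 2 ≤ √(f t) ^ 2 := by gcongr
      _ = f t := sq_sqrt hf0
  have hfN : ∀ t, f t ≤ N * ‖d t‖ ^ 2 := by
    intro t
    calc f t ≤ ∑ _i : Fin N, ‖d t‖ ^ 2 := by
          refine Finset.sum_le_sum fun i _ => ?_
          rw [← sq_abs]
          have := norm_le_pi_norm (d t) i
          rw [Real.norm_eq_abs] at this
          gcongr
      _ = N * ‖d t‖ ^ 2 := by simp
  have hR : ∀ t, 0 ≤ t → ‖d t‖ ≤ √(f 0) := fun t ht =>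
    le_sqrt_of_sq_le ((hnorm t).trans (le_apply_zero_of_deriv_nonpos hfder hnonpos ht))
  obtain ⟨c, hc, hstrong⟩ := Kt_strong hT hI hrs (√(f 0))
  have hdecay : ∀ t ∈ Set.Ici (0 : ℝ), f' t ≤ -(2 * c / N) * f t := by
    intro t ht
    have h1 := hbound t
    have h2 := hstrong (d t) (hdsum t ht) (hR t ht)
    have h3 : c / N * f t ≤ c * ‖d t‖ ^ 2 := by
      calc c / N * f t ≤ c / N * (N * ‖d t‖ ^ 2) := by gcongr; exact hfN t
        _ = c * ‖d t‖ ^ 2 := by field_simp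
    have : 2 * c / N * f t = 2 * (c / N * f t) := by ring
    linarith
  set γ : ℝ := 2 * c / N with hγ
  have hγ0 : 0 < γ := by positivity
  have hgron : ∀ t, 0 ≤ t → f t ≤ f 0 * exp (-γ * t) := by
    intro t ht
    have hE : ∀ t : ℝ, HasDerivAt (fun s => exp (γ * s)) (exp (γ * t) * γ) t := fun t => by
      simpa using ((hasDerivAt_id t).const_mul γ).exp
    have h := le_apply_zero_of_deriv_nonpos (f := fun t => f t * exp (γ * t))
      (fun t ht => (hfder t ht).mul (hE t).hasDerivWithinAt) (fun t ht => by
        have := mul_le_mul_of_nonneg_right (hdecay t ht) (exp_pos (γ * t)).le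
        linarith) ht
    simp only [mul_zero, exp_zero, mul_one] at h
    calc f t = f t * exp (γ * t) * exp (-γ * t) := by
          rw [mul_assoc, ← exp_add]; simp
      _ ≤ f 0 * exp (-γ * t) := by gcongr
  refine ⟨√(f 0) + 1, γ / 2, by positivity, by positivity, fun t ht => ?_⟩
  have hf00 : 0 ≤ f 0 := Finset.sum_nonneg fun i _ => sq_nonneg _
  have h1 : ‖d t‖ ≤ √(f 0) * exp (-(γ / 2) * t) := by
    refine le_of_sq_le_sq ?_ (by positivity)
    rw [mul_pow, sq_sqrt hf00, ← exp_nat_mul]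
    refine (hnorm t).trans ((hgron t ht).trans_eq ?_)
    congr 2
    push_cast; ring
  refine h1.trans ?_
  gcongr
  linarith

end IDCP
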